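/- arXiv:1103.0078 — 5 statements merged into one kernel-verified Lean document; each statement's English description precedes it below -/
import Mathlib

section
/- Let γ > 1, q_cr = √(2/(γ+1)), ρ(q) = (1 - ((γ-1)/2)q²)^{1/(γ-1)}, and n ≥ 1. For all u, v ∈ ℝⁿ with |u| ≤ q_cr and |v| ≤ q_cr, the quantity I(u,v) := Σᵢ₌₁ⁿ (uᵢ - vᵢ)(ρ(|u|)uᵢ - ρ(|v|)vᵢ) satisfies I(u,v) ≥ 0, and I(u,v) = 0 if and only if u = v. -/
/-!
Write `ρ(q)` for the density, `a = ‖u‖`, `b = ‖v‖`. Expanding,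
`I(u,v) = (a - b) (a ρ(a) - b ρ(b)) + (ρ(a) + ρ(b)) (a b - ⟪u, v⟫)`.
The second term is nonnegative by Cauchy–Schwarz and `ρ > 0` (`density_pos`). The first is
nonnegative, and positive for `a ≠ b`, because the mass flux `q ↦ q ρ(q)` is strictly increasing up
to the critical speed (`flux_strictMonoOn`): its derivative is a positive multiple of
`1 - (γ + 1) / 2 * q ^ 2`. If `I(u,v) = 0`, then `a = b`, hence `I(u,v) = ρ(a) ‖u - v‖ ^ 2` and
`u = v`.
-/

/-- The polytropic density `ρ(q)` given by the normalized Bernoulli law. -/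
noncomputable def density (γ q : ℝ) : ℝ := (1 - ((γ - 1) / 2) * q ^ 2) ^ (1 / (γ - 1))

lemma sq_mul_le_of_le_critical {γ q : ℝ} (hγ : 1 < γ) (h0 : 0 ≤ q)
    (hq : q ≤ Real.sqrt (2 / (γ + 1))) : (γ + 1) * q ^ 2 ≤ 2 := by
  have h := (Real.le_sqrt h0 (by positivity)).1 hq
  rw [le_div_iff₀ (by linarith)] at h
  linarith

lemma density_base_pos {γ q : ℝ} (hγ : 1 < γ) (h0 : 0 ≤ q)
    (hq : q ≤ Real.sqrt (2 / (γ + 1))) : 0 < 1 - ((γ - 1) / 2) * q ^ 2 := by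
  have h := sq_mul_le_of_le_critical hγ h0 hq
  by_contra hc
  have h1 : q ^ 2 ≤ 0 := by linarith
  nlinarith [sq_nonneg q]

lemma density_pos {γ q : ℝ} (hγ : 1 < γ) (h0 : 0 ≤ q)
    (hq : q ≤ Real.sqrt (2 / (γ + 1))) : 0 < density γ q :=
  Real.rpow_pos_of_pos (density_base_pos hγ h0 hq) _

lemma flux_hasDerivAt {γ q : ℝ} (hγ : 1 < γ) (hb : 0 < 1 - ((γ - 1) / 2) * q ^ 2) :
    HasDerivAt (fun q => q * density γ q)
      ((1 - ((γ - 1) / 2) * q ^ 2) ^ (1 / (γ - 1) - 1) * (1 - (γ + 1) / 2 * q ^ 2)) q := by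
  have hB : HasDerivAt (fun q : ℝ => 1 - ((γ - 1) / 2) * q ^ 2) (-((γ - 1) * q)) q := by
    refine (((hasDerivAt_pow 2 q).const_mul ((γ - 1) / 2)).const_sub 1).congr_deriv ?_
    push_cast
    ring
  have h := (hasDerivAt_id q).mul (hB.rpow_const (p := 1 / (γ - 1)) (Or.inl hb.ne'))
  refine h.congr_deriv ?_
  have hne : γ - 1 ≠ 0 := by linarith
  have hsplit : (1 - ((γ - 1) / 2) * q ^ 2) ^ (1 / (γ - 1)) =
      (1 - ((γ - 1) / 2) * q ^ 2) ^ (1 / (γ - 1) - 1) * (1 - ((γ - 1) / 2) * q ^ 2) := by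
    rw [← Real.rpow_add_one hb.ne', sub_add_cancel]
  rw [hsplit]
  have hc : (γ - 1) * (1 / (γ - 1)) = 1 := by field_simp
  simp only [id]
  linear_combination (-q ^ 2 * (1 - ((γ - 1) / 2) * q ^ 2) ^ (1 / (γ - 1) - 1)) * hc

lemma flux_strictMonoOn {γ : ℝ} (hγ : 1 < γ) :
    StrictMonoOn (fun q => q * density γ q) (Set.Icc 0 (Real.sqrt (2 / (γ + 1)))) := by
  refine strictMonoOn_of_deriv_pos (convex_Icc _ _) (fun q hq =>
    (flux_hasDerivAt hγ (density_base_pos hγ hq.1 hq.2)).continuousAt.continuousWithinAt) ?_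
  intro q hq
  rw [interior_Icc] at hq
  have hb := density_base_pos hγ hq.1.le hq.2.le
  rw [(flux_hasDerivAt hγ hb).deriv]
  have h := (Real.lt_sqrt hq.1.le).1 hq.2
  rw [lt_div_iff₀ (by linarith)] at h
  exact mul_pos (Real.rpow_pos_of_pos hb _) (by linarith)

/-- Key pointwise lemma: for the polytropic density, `I(u,v) ≥ 0` on the sonic-subsonic
ball, with equality iff `u = v`. -/
theorem I_nonneg_polytropic (γ : ℝ) (hγ : 1 < γ) (n : ℕ) (hn : 1 ≤ n)
    (u v : EuclideanSpace ℝ (Fin n))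
    (hu : ‖u‖ ≤ Real.sqrt (2 / (γ + 1))) (hv : ‖v‖ ≤ Real.sqrt (2 / (γ + 1))) :
    (∑ i, (u i - v i) * ((1 - ((γ - 1) / 2) * ‖u‖ ^ 2) ^ (1 / (γ - 1)) * u i -
        (1 - ((γ - 1) / 2) * ‖v‖ ^ 2) ^ (1 / (γ - 1)) * v i)) ≥ 0 ∧
      ((∑ i, (u i - v i) * ((1 - ((γ - 1) / 2) * ‖u‖ ^ 2) ^ (1 / (γ - 1)) * u i -
          (1 - ((γ - 1) / 2) * ‖v‖ ^ 2) ^ (1 / (γ - 1)) * v i)) = 0 ↔ u = v) := by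
  change (∑ i, (u i - v i) * (density γ ‖u‖ * u i - density γ ‖v‖ * v i)) ≥ 0 ∧
    ((∑ i, (u i - v i) * (density γ ‖u‖ * u i - density γ ‖v‖ * v i)) = 0 ↔ u = v)
  have key : ∑ i, (u i - v i) * (density γ ‖u‖ * u i - density γ ‖v‖ * v i) =
      (‖u‖ - ‖v‖) * (‖u‖ * density γ ‖u‖ - ‖v‖ * density γ ‖v‖) +
        (density γ ‖u‖ + density γ ‖v‖) * (‖u‖ * ‖v‖ - inner ℝ u v) := by
    have h1 : ∑ i, (u i - v i) * (density γ ‖u‖ * u i - density γ ‖v‖ * v i) =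
        inner ℝ (u - v) (density γ ‖u‖ • u - density γ ‖v‖ • v) := by
      simp [PiLp.inner_apply, mul_comm]
    rw [h1]
    simp only [inner_sub_left, inner_sub_right, inner_smul_right, real_inner_self_eq_norm_sq,
      real_inner_comm u v]
    ring
  have pu := density_pos hγ (norm_nonneg u) hu
  have pv := density_pos hγ (norm_nonneg v) hv
  have hmono := flux_strictMonoOn hγ
  have mu : ‖u‖ ∈ Set.Icc 0 (Real.sqrt (2 / (γ + 1))) := ⟨norm_nonneg u, hu⟩
  have mv : ‖v‖ ∈ Set.Icc 0 (Real.sqrt (2 / (γ + 1))) := ⟨norm_nonneg v, hv⟩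
  have hcs : 0 ≤ ‖u‖ * ‖v‖ - inner ℝ u v := sub_nonneg.2 (real_inner_le_norm u v)
  have hsec := mul_nonneg (add_pos pu pv).le hcs
  have hfirst : ‖u‖ ≠ ‖v‖ →
      0 < (‖u‖ - ‖v‖) * (‖u‖ * density γ ‖u‖ - ‖v‖ * density γ ‖v‖) := by
    intro hne
    rcases lt_or_gt_of_ne hne with h | h
    · exact mul_pos_of_neg_of_neg (sub_neg.2 h) (sub_neg.2 (hmono mu mv h))
    · exact mul_pos (sub_pos.2 h) (sub_pos.2 (hmono mv mu h))
  rw [key]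
  by_cases hab : ‖u‖ = ‖v‖
  · rw [hab] at hsec ⊢
    refine ⟨by linarith, fun h => ?_, fun h => ?_⟩
    · have h2 : ‖v‖ * ‖v‖ - inner ℝ u v = 0 := by
        have h3 : (density γ ‖v‖ + density γ ‖v‖) * (‖v‖ * ‖v‖ - inner ℝ u v) = 0 := by
          linarith
        exact (mul_eq_zero.1 h3).resolve_left (by linarith)
      have h4 := norm_sub_sq_real u v
      rw [hab] at h4
      have h5 : ‖u - v‖ ^ 2 = 0 := by linarith
      simpa [sub_eq_zero] using h5
    · rw [h, real_inner_self_eq_norm_sq]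
      ring
  · have := hfirst hab
    refine ⟨by linarith, fun h => by linarith, fun h => absurd (congrArg norm h) hab⟩
end

section
/- Let ρ₀ > 0, c̄ > 0, ρ(q) = ρ₀·exp(-q²/(2c̄²)), and n ≥ 1. For all u, v ∈ ℝⁿ with |u| ≤ c̄ and |v| ≤ c̄, the quantity I(u,v) := Σᵢ₌₁ⁿ (uᵢ - vᵢ)(ρ(|u|)uᵢ - ρ(|v|)vᵢ) satisfies I(u,v) ≥ 0, and I(u,v) = 0 if and only if u = v. -/
/-!
Write `a = ‖u‖`, `b = ‖v‖`, `A = ρ(a)`, `B = ρ(b)`. Expanding the inner product gives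
`I(u,v) = (a - b) (A a - B b) + (A + B) (a b - ⟪u, v⟫)`.
The second summand is nonnegative by Cauchy–Schwarz. The first is nonnegative, and zero only for
`a = b`, because the mass flux `q ↦ ρ(q) q` is strictly increasing up to the sonic speed `c`
(`flux_lt`). If `I(u,v) = 0`, both summands vanish, so `‖u - v‖² = (a - b)² + 2 (a b - ⟪u, v⟫) = 0`.
-/

/-- The isothermal mass flux is strictly increasing on `[0, c]`. After squaring, this is
`s < exp (s - 1)` at `s = (a / b)²`, combined with `s - 1 ≤ (a² - b²) / c²`. -/
lemma flux_lt {c a b : ℝ} (ha : 0 ≤ a) (hab : a < b) (hb : b ≤ c) :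
    Real.exp (-a ^ 2 / (2 * c ^ 2)) * a < Real.exp (-b ^ 2 / (2 * c ^ 2)) * b := by
  have hb0 : 0 < b := ha.trans_lt hab
  have hc : 0 < c := hb0.trans_le hb
  have hsq : a ^ 2 < b ^ 2 := by gcongr
  have hne : (a ^ 2 - b ^ 2) / b ^ 2 ≠ 0 := by
    have : a ^ 2 - b ^ 2 ≠ 0 := by linarith
    positivity
  have h1 := Real.add_one_lt_exp hne
  have h2 : (a ^ 2 - b ^ 2) / b ^ 2 ≤ (a ^ 2 - b ^ 2) / c ^ 2 := by
    have : (b ^ 2 - a ^ 2) / c ^ 2 ≤ (b ^ 2 - a ^ 2) / b ^ 2 := by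
      have : 0 ≤ b ^ 2 - a ^ 2 := by linarith
      gcongr
    rw [← neg_sub (b ^ 2), neg_div, neg_div]
    linarith
  have h3 : a ^ 2 / b ^ 2 < Real.exp ((a ^ 2 - b ^ 2) / c ^ 2) := by
    have h4 : (a ^ 2 - b ^ 2) / b ^ 2 + 1 = a ^ 2 / b ^ 2 := by field_simp; ring
    rw [← h4]
    exact h1.trans_le (Real.exp_le_exp.2 h2)
  rw [div_lt_iff₀ (by positivity)] at h3
  have hexp (x : ℝ) : Real.exp (-x ^ 2 / (2 * c ^ 2)) ^ 2 = Real.exp (-x ^ 2 / c ^ 2) := by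
    rw [← Real.exp_nat_mul]
    congr 1
    push_cast
    field_simp
  refine lt_of_pow_lt_pow_left₀ 2 (by positivity) ?_
  rw [mul_pow, mul_pow, hexp, hexp]
  have h5 : Real.exp (-b ^ 2 / c ^ 2)
      = Real.exp (-a ^ 2 / c ^ 2) * Real.exp ((a ^ 2 - b ^ 2) / c ^ 2) := by
    rw [← Real.exp_add]
    congr 1
    ring
  rw [h5, mul_assoc]
  exact mul_lt_mul_of_pos_left h3 (Real.exp_pos _)

/-- Key pointwise lemma: for the isothermal density, `I(u,v) ≥ 0` on the sonic-subsonic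
ball, with equality iff `u = v`. -/
theorem I_nonneg_isothermal (ρ₀ c : ℝ) (hρ₀ : 0 < ρ₀) (hc : 0 < c)
    (n : ℕ) (hn : 1 ≤ n) (u v : EuclideanSpace ℝ (Fin n))
    (hu : ‖u‖ ≤ c) (hv : ‖v‖ ≤ c) :
    (∑ i, (u i - v i) * (ρ₀ * Real.exp (-‖u‖ ^ 2 / (2 * c ^ 2)) * u i -
        ρ₀ * Real.exp (-‖v‖ ^ 2 / (2 * c ^ 2)) * v i)) ≥ 0 ∧
      ((∑ i, (u i - v i) * (ρ₀ * Real.exp (-‖u‖ ^ 2 / (2 * c ^ 2)) * u i -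
          ρ₀ * Real.exp (-‖v‖ ^ 2 / (2 * c ^ 2)) * v i)) = 0 ↔ u = v) := by
  have hflux : 0 ≤ (‖u‖ - ‖v‖) * (Real.exp (-‖u‖ ^ 2 / (2 * c ^ 2)) * ‖u‖ -
        Real.exp (-‖v‖ ^ 2 / (2 * c ^ 2)) * ‖v‖) ∧
      ((‖u‖ - ‖v‖) * (Real.exp (-‖u‖ ^ 2 / (2 * c ^ 2)) * ‖u‖ -
        Real.exp (-‖v‖ ^ 2 / (2 * c ^ 2)) * ‖v‖) = 0 → ‖u‖ = ‖v‖) := by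
    rcases lt_trichotomy ‖u‖ ‖v‖ with h | h | h
    · have := mul_pos_of_neg_of_neg (sub_neg.2 h) (sub_neg.2 (flux_lt (norm_nonneg u) h hv))
      exact ⟨this.le, fun h0 => absurd h0 this.ne'⟩
    · simp [h]
    · have := mul_pos (sub_pos.2 h) (sub_pos.2 (flux_lt (norm_nonneg v) h hu))
      exact ⟨this.le, fun h0 => absurd h0 this.ne'⟩
  have hA := Real.exp_pos (-‖u‖ ^ 2 / (2 * c ^ 2))
  have hB := Real.exp_pos (-‖v‖ ^ 2 / (2 * c ^ 2))
  generalize Real.exp (-‖u‖ ^ 2 / (2 * c ^ 2)) = A at *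
  generalize Real.exp (-‖v‖ ^ 2 / (2 * c ^ 2)) = B at *
  obtain ⟨hF, hF0⟩ := hflux
  have hCS : 0 ≤ ‖u‖ * ‖v‖ - inner ℝ u v := sub_nonneg.2 (real_inner_le_norm u v)
  have hI : (∑ i, (u i - v i) * (ρ₀ * A * u i - ρ₀ * B * v i)) =
      ρ₀ * ((‖u‖ - ‖v‖) * (A * ‖u‖ - B * ‖v‖) +
        (A + B) * (‖u‖ * ‖v‖ - inner ℝ u v)) := by
    have h1 : (∑ i, (u i - v i) * (ρ₀ * A * u i - ρ₀ * B * v i)) =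
        inner ℝ (u - v) ((ρ₀ * A) • u - (ρ₀ * B) • v) := by
      simp [PiLp.inner_apply, mul_comm]
    rw [h1]
    simp only [inner_sub_left, inner_sub_right, inner_smul_right, real_inner_self_eq_norm_sq,
      real_inner_comm u v]
    ring
  rw [hI]
  have hS : 0 ≤ (A + B) * (‖u‖ * ‖v‖ - inner ℝ u v) := mul_nonneg (by linarith) hCS
  refine ⟨mul_nonneg hρ₀.le (add_nonneg hF hS), fun h => ?_, ?_⟩
  · have h' := (mul_eq_zero.1 h).resolve_left hρ₀.ne'
    have hn' : ‖u‖ = ‖v‖ := hF0 (by linarith)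
    have hin := (mul_eq_zero.1 (show (A + B) * (‖u‖ * ‖v‖ - inner ℝ u v) = 0 by
      linarith)).resolve_left (by linarith)
    have h2 := norm_sub_sq_real u v
    rw [← sub_eq_zero, ← norm_eq_zero, ← sq_eq_zero_iff, h2]
    rw [hn'] at hin ⊢
    linarith
  · rintro rfl
    rw [real_inner_self_eq_norm_sq]
    ring
end

section
/- Let Q > 0 and let ρ : ℝ → ℝ be continuous with ρ(q) > 0 for all q ∈ [0, Q], and suppose q ↦ ρ(q)·q is strictly increasing on [0, Q]. Then for any n ≥ 1 and all u, v ∈ ℝⁿ with |u| ≤ Q and |v| ≤ Q, the quantity I(u,v) := Σᵢ₌₁ⁿ (uᵢ - vᵢ)(ρ(|u|)uᵢ - ρ(|v|)vᵢ) satisfies I(u,v) ≥ 0, and I(u,v) = 0 if and only if u = v. -/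
/-!
Write `a = |u|`, `b = |v|`. Expanding the inner product gives
`I(u,v) = (a - b)(ρ(a)a - ρ(b)b) + (ρ(a) + ρ(b))(ab - ⟨u,v⟩)`.
The first term is nonnegative by monotonicity of `q ↦ ρ(q)q`, the second by positivity of `ρ` and
Cauchy-Schwarz. If `I(u,v) = 0`, both vanish: strict monotonicity gives `a = b`, positivity gives
`⟨u,v⟩ = ab`, and hence `|u - v|² = a² - 2⟨u,v⟩ + b² = 0`.
-/

/-- Key pointwise lemma for a general density: if `ρ` is continuous and positive on
`[0, Q]` and `q ↦ ρ(q)q` is strictly increasing there, then `I(u,v) ≥ 0` on the ball of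
radius `Q`, with equality iff `u = v`. -/
theorem I_nonneg_general (Q : ℝ) (hQ : 0 < Q) (ρ : ℝ → ℝ)
    (hρcont : Continuous ρ) (hρpos : ∀ q ∈ Set.Icc 0 Q, 0 < ρ q)
    (hmono : StrictMonoOn (fun q => ρ q * q) (Set.Icc 0 Q))
    (n : ℕ) (hn : 1 ≤ n) (u v : EuclideanSpace ℝ (Fin n))
    (hu : ‖u‖ ≤ Q) (hv : ‖v‖ ≤ Q) :
    (∑ i, (u i - v i) * (ρ ‖u‖ * u i - ρ ‖v‖ * v i)) ≥ 0 ∧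
      ((∑ i, (u i - v i) * (ρ ‖u‖ * u i - ρ ‖v‖ * v i)) = 0 ↔ u = v) := by
  have ha : ‖u‖ ∈ Set.Icc 0 Q := ⟨norm_nonneg u, hu⟩
  have hb : ‖v‖ ∈ Set.Icc 0 Q := ⟨norm_nonneg v, hv⟩
  have key : (∑ i, (u i - v i) * (ρ ‖u‖ * u i - ρ ‖v‖ * v i)) =
      (‖u‖ - ‖v‖) * (ρ ‖u‖ * ‖u‖ - ρ ‖v‖ * ‖v‖) +
        (ρ ‖u‖ + ρ ‖v‖) * (‖u‖ * ‖v‖ - inner ℝ u v) := by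
    have h : (∑ i, (u i - v i) * (ρ ‖u‖ * u i - ρ ‖v‖ * v i)) =
        inner ℝ (u - v) (ρ ‖u‖ • u - ρ ‖v‖ • v) := by
      simp [PiLp.inner_apply, mul_comm]
    rw [h]
    simp only [inner_sub_left, inner_sub_right, real_inner_smul_right,
      real_inner_self_eq_norm_sq, real_inner_comm u v]
    ring
  have hρ : 0 < ρ ‖u‖ + ρ ‖v‖ := add_pos (hρpos _ ha) (hρpos _ hb)
  have hcs : 0 ≤ ‖u‖ * ‖v‖ - inner ℝ u v := sub_nonneg.2 (real_inner_le_norm u v)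
  have hstrict : ‖u‖ ≠ ‖v‖ → 0 < (‖u‖ - ‖v‖) * (ρ ‖u‖ * ‖u‖ - ρ ‖v‖ * ‖v‖) := by
    intro hne
    rcases lt_or_gt_of_ne hne with h | h
    · exact mul_pos_of_neg_of_neg (sub_neg.2 h) (sub_neg.2 (hmono ha hb h))
    · exact mul_pos (sub_pos.2 h) (sub_pos.2 (hmono hb ha h))
  have hsecond := mul_nonneg hρ.le hcs
  rw [key]
  by_cases hab : ‖u‖ = ‖v‖
  · have hfirst : (‖u‖ - ‖v‖) * (ρ ‖u‖ * ‖u‖ - ρ ‖v‖ * ‖v‖) = 0 := by simp [hab]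
    rw [hfirst, zero_add]
    refine ⟨hsecond, fun h => ?_, fun h => ?_⟩
    · have hinner := (mul_eq_zero.1 h).resolve_left hρ.ne'
      have hsq := norm_sub_sq_real u v
      rw [hab] at hsq hinner
      have hzero : ‖u - v‖ ^ 2 = 0 := by linarith
      exact sub_eq_zero.1 (norm_eq_zero.1 (pow_eq_zero_iff two_ne_zero |>.1 hzero))
    · subst h
      rw [real_inner_self_eq_norm_mul_norm, sub_self, mul_zero]
  · have hpos := hstrict hab
    exact ⟨by linarith, fun h => by linarith, fun h => absurd (congrArg norm h) hab⟩
end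

section
/- Let γ > 1, q_cr = √(2/(γ+1)), ρ(q) = (1 - ((γ-1)/2)q²)^{1/(γ-1)}, and n ≥ 1. Let ν be a Borel probability measure on ℝⁿ supported in the closed ball {u : |u| ≤ q_cr}, and suppose ν satisfies the identity ∫ ρ(|u|)|u|² dν(u) = Σᵢ₌₁ⁿ (∫ ρ(|u|)uᵢ dν(u))·(∫ uᵢ dν(u)). Then ν is a Dirac mass: there exists u₀ ∈ ℝⁿ with |u₀| ≤ q_cr such that ν = δ_{u₀}. -/
/-!
Write `ρ(q) = (1 - (γ-1)/2 q²)^(1/(γ-1))`, `q_cr = √(2/(γ+1))`, and let `m = ∫ u dν` be the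
barycentre of `ν`, which lies in the closed ball of radius `q_cr`. Expanding the inner product,
the commutation identity says exactly that
`∫ ⟪ρ(|u|) u - ρ(|m|) m, u - m⟫ dν(u) = 0`.
The mass flux `u ↦ ρ(|u|) u` is strictly monotone on the sonic-subsonic ball: for `|u| = a` and
`|m| = b`, Cauchy-Schwarz bounds the integrand below by `(ρ(a) a - ρ(b) b) (a - b)`, and
`q ↦ q ρ(q)` is strictly increasing on `[0, q_cr]` since its derivative is
`(1 - (γ-1)/2 q²)^(1/(γ-1) - 1) (1 - (γ+1)/2 q²)`. Hence the integrand is nonnegative and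
vanishes only at `u = m`, so `u = m` almost everywhere. Only one integral is needed because `ν` is
compared with its barycentre rather than with an independent copy of itself.

The proof rests on `massFlux_strictMonoOn` and `massFlux_monotone`.
-/

open MeasureTheory

/-- The Bernoulli density of a polytropic gas as a function of the speed. -/
noncomputable def bernoulliDensity (γ q : ℝ) : ℝ :=
  (1 - ((γ - 1) / 2) * q ^ 2) ^ (1 / (γ - 1))

lemma sq_le_of_subsonic {γ q : ℝ} (hγ : 1 < γ) (hq0 : 0 ≤ q)
    (hq : q ≤ Real.sqrt (2 / (γ + 1))) : (γ + 1) * q ^ 2 ≤ 2 := by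
  have h := (Real.le_sqrt hq0 (by positivity)).1 hq
  rw [le_div_iff₀ (by linarith)] at h
  linarith

lemma bernoulli_base_pos {γ q : ℝ} (hγ : 1 < γ) (hq0 : 0 ≤ q)
    (hq : q ≤ Real.sqrt (2 / (γ + 1))) : 0 < 1 - ((γ - 1) / 2) * q ^ 2 := by
  have h := sq_le_of_subsonic hγ hq0 hq
  have h1 : q ^ 2 < 1 := by nlinarith
  nlinarith

lemma bernoulliDensity_pos {γ q : ℝ} (hγ : 1 < γ) (hq0 : 0 ≤ q)
    (hq : q ≤ Real.sqrt (2 / (γ + 1))) : 0 < bernoulliDensity γ q :=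
  Real.rpow_pos_of_pos (bernoulli_base_pos hγ hq0 hq) _

lemma bernoulliDensity_le_one {γ q : ℝ} (hγ : 1 < γ) (hq0 : 0 ≤ q)
    (hq : q ≤ Real.sqrt (2 / (γ + 1))) : bernoulliDensity γ q ≤ 1 := by
  refine Real.rpow_le_one (bernoulli_base_pos hγ hq0 hq).le ?_ ?_
  · nlinarith [sq_nonneg q]
  · exact (one_div_pos.2 (by linarith)).le

lemma continuous_bernoulliDensity {γ : ℝ} (hγ : 1 < γ) : Continuous (bernoulliDensity γ) := by
  unfold bernoulliDensity
  refine Continuous.rpow_const (by fun_prop) fun x => Or.inr ?_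
  exact (one_div_pos.2 (by linarith)).le

/-- The scalar mass flux is strictly increasing up to the critical speed. -/
lemma massFlux_strictMonoOn {γ : ℝ} (hγ : 1 < γ) :
    StrictMonoOn (fun q => q * bernoulliDensity γ q) (Set.Icc 0 (Real.sqrt (2 / (γ + 1)))) := by
  have hc : Continuous (fun q => q * bernoulliDensity γ q) :=
    continuous_id.mul (continuous_bernoulliDensity hγ)
  refine strictMonoOn_of_deriv_pos (convex_Icc _ _) hc.continuousOn ?_
  intro q hq
  rw [interior_Icc] at hq
  have hB := bernoulli_base_pos hγ hq.1.le hq.2.le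
  have hd : HasDerivAt (fun q : ℝ => 1 - ((γ - 1) / 2) * q ^ 2) (-((γ - 1) * q)) q := by
    have := ((hasDerivAt_pow 2 q).const_mul ((γ - 1) / 2)).const_sub 1
    refine this.congr_deriv ?_
    norm_num
    ring
  have hd2 := (hasDerivAt_id' q).mul (hd.rpow_const (p := 1 / (γ - 1)) (Or.inl hB.ne'))
  have hd3 : deriv (fun q => q * bernoulliDensity γ q) q = _ := hd2.deriv
  rw [hd3]
  have hlt : (γ + 1) * q ^ 2 < 2 := by
    have h := (Real.lt_sqrt hq.1.le).1 hq.2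
    rw [lt_div_iff₀ (by linarith)] at h
    linarith
  have hsplit : (1 - ((γ - 1) / 2) * q ^ 2) ^ (1 / (γ - 1)) =
      (1 - ((γ - 1) / 2) * q ^ 2) ^ (1 / (γ - 1) - 1) * (1 - ((γ - 1) / 2) * q ^ 2) := by
    rw [Real.rpow_sub_one hB.ne', div_mul_cancel₀ _ hB.ne']
  have hP : 0 < (1 - ((γ - 1) / 2) * q ^ 2) ^ (1 / (γ - 1) - 1) := Real.rpow_pos_of_pos hB _
  rw [hsplit]
  generalize (1 - ((γ - 1) / 2) * q ^ 2) ^ (1 / (γ - 1) - 1) = P at hP ⊢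
  have hg : γ - 1 ≠ 0 := by linarith
  have : 1 * (P * (1 - (γ - 1) / 2 * q ^ 2)) + q * (-((γ - 1) * q) * (1 / (γ - 1)) * P) =
      P * (1 - (γ + 1) / 2 * q ^ 2) := by
    field_simp
    ring
  rw [this]
  exact mul_pos hP (by linarith)

/-- Strict monotonicity of the vector mass flux `u ↦ ρ(|u|) u` on the sonic-subsonic ball. -/
lemma massFlux_monotone {E : Type*} [NormedAddCommGroup E] [InnerProductSpace ℝ E]
    {γ : ℝ} (hγ : 1 < γ) {u v : E} (hu : ‖u‖ ≤ Real.sqrt (2 / (γ + 1)))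
    (hv : ‖v‖ ≤ Real.sqrt (2 / (γ + 1))) :
    0 ≤ inner ℝ (bernoulliDensity γ ‖u‖ • u - bernoulliDensity γ ‖v‖ • v) (u - v) ∧
      (inner ℝ (bernoulliDensity γ ‖u‖ • u - bernoulliDensity γ ‖v‖ • v) (u - v) = 0 →
        u = v) := by
  have hp := bernoulliDensity_pos hγ (norm_nonneg u) hu
  have hr := bernoulliDensity_pos hγ (norm_nonneg v) hv
  rcases eq_or_ne ‖u‖ ‖v‖ with hab | hab
  · rw [hab, ← smul_sub, real_inner_smul_left, real_inner_self_eq_norm_sq]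
    refine ⟨by positivity, fun h => ?_⟩
    simpa [hr.ne', sub_eq_zero] using h
  · have hexp : inner ℝ (bernoulliDensity γ ‖u‖ • u - bernoulliDensity γ ‖v‖ • v) (u - v) =
        bernoulliDensity γ ‖u‖ * ‖u‖ ^ 2 + bernoulliDensity γ ‖v‖ * ‖v‖ ^ 2 -
          (bernoulliDensity γ ‖u‖ + bernoulliDensity γ ‖v‖) * inner ℝ u v := by
      simp only [inner_sub_left, inner_sub_right, real_inner_smul_left,
        real_inner_self_eq_norm_sq, real_inner_comm u v]
      ring
    have hcs := mul_le_mul_of_nonneg_left (real_inner_le_norm u v) (add_pos hp hr).le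
    have hmono : 0 < (‖u‖ * bernoulliDensity γ ‖u‖ - ‖v‖ * bernoulliDensity γ ‖v‖) *
        (‖u‖ - ‖v‖) := by
      rcases lt_or_gt_of_ne hab with h | h
      · have := massFlux_strictMonoOn hγ ⟨norm_nonneg u, hu⟩ ⟨norm_nonneg v, hv⟩ h
        exact mul_pos_of_neg_of_neg (sub_neg.2 this) (sub_neg.2 h)
      · have := massFlux_strictMonoOn hγ ⟨norm_nonneg v, hv⟩ ⟨norm_nonneg u, hu⟩ h
        exact mul_pos (sub_pos.2 this) (sub_pos.2 h)
    have hpos : 0 < inner ℝ (bernoulliDensity γ ‖u‖ • u - bernoulliDensity γ ‖v‖ • v) (u - v) := by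
      rw [hexp]
      linarith
    exact ⟨hpos.le, fun h => absurd h hpos.ne'⟩

/-- Compensated compactness framework (polytropic case): a Young measure supported in the
sonic-subsonic ball satisfying the div-curl commutation identity is a Dirac mass. -/
theorem young_measure_dirac_polytropic (γ : ℝ) (hγ : 1 < γ) (n : ℕ) (hn : 1 ≤ n)
    (ν : Measure (EuclideanSpace ℝ (Fin n))) [IsProbabilityMeasure ν]
    (hsupp : ν (Metric.closedBall 0 (Real.sqrt (2 / (γ + 1))))ᶜ = 0)
    (hcomm : ∫ u, (1 - ((γ - 1) / 2) * ‖u‖ ^ 2) ^ (1 / (γ - 1)) * ‖u‖ ^ 2 ∂ν =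
      ∑ i, (∫ u, (1 - ((γ - 1) / 2) * ‖u‖ ^ 2) ^ (1 / (γ - 1)) * u i ∂ν) *
        (∫ u, u i ∂ν)) :
    ∃ u₀ : EuclideanSpace ℝ (Fin n),
      ‖u₀‖ ≤ Real.sqrt (2 / (γ + 1)) ∧ ν = Measure.dirac u₀ := by
  set Q := Real.sqrt (2 / (γ + 1)) with hQ
  have hball : ∀ᵐ u ∂ν, ‖u‖ ≤ Q := by
    have : ∀ᵐ u ∂ν, u ∈ Metric.closedBall (0 : EuclideanSpace ℝ (Fin n)) Q := hsupp
    simpa using this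
  have hρc := continuous_bernoulliDensity hγ
  have hint : Integrable (fun u : EuclideanSpace ℝ (Fin n) => u) ν :=
    Integrable.of_bound continuous_id.aestronglyMeasurable Q hball
  have hflux : Integrable
      (fun u : EuclideanSpace ℝ (Fin n) => bernoulliDensity γ ‖u‖ • u) ν := by
    refine Integrable.of_bound
      (((hρc.comp continuous_norm).smul continuous_id).aestronglyMeasurable) Q ?_
    filter_upwards [hball] with u hu
    have h0 := bernoulliDensity_pos hγ (norm_nonneg u) hu
    have h1 := bernoulliDensity_le_one hγ (norm_nonneg u) hu
    rw [norm_smul, Real.norm_of_nonneg h0.le]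
    nlinarith [norm_nonneg u]
  have hener : Integrable
      (fun u : EuclideanSpace ℝ (Fin n) => bernoulliDensity γ ‖u‖ * ‖u‖ ^ 2) ν := by
    refine Integrable.of_bound
      (((hρc.comp continuous_norm).mul (continuous_norm.pow 2)).aestronglyMeasurable) (Q ^ 2) ?_
    filter_upwards [hball] with u hu
    have h0 := bernoulliDensity_pos hγ (norm_nonneg u) hu
    have h1 := bernoulliDensity_le_one hγ (norm_nonneg u) hu
    have h2 : ‖u‖ ^ 2 ≤ Q ^ 2 := by gcongr
    rw [Real.norm_of_nonneg (by positivity)]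
    nlinarith [sq_nonneg ‖u‖]
  set m : EuclideanSpace ℝ (Fin n) := ∫ u, u ∂ν with hm
  have hmQ : ‖m‖ ≤ Q := by
    simpa using norm_integral_le_of_norm_le_const hball
  have hcoord : ∀ f : EuclideanSpace ℝ (Fin n) → EuclideanSpace ℝ (Fin n), Integrable f ν →
      ∀ i, (∫ u, f u ∂ν) i = ∫ u, f u i ∂ν := fun f hf i =>
    ((EuclideanSpace.proj (𝕜 := ℝ) i).integral_comp_comm hf).symm
  have hcomm' : ∫ u, bernoulliDensity γ ‖u‖ * ‖u‖ ^ 2 ∂ν =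
      inner ℝ m (∫ u, bernoulliDensity γ ‖u‖ • u ∂ν) := by
    refine hcomm.trans ?_
    rw [PiLp.inner_apply]
    refine Finset.sum_congr rfl fun i _ => ?_
    rw [hcoord _ hflux i, hm, hcoord _ hint i]
    rfl
  have hexp : ∀ u : EuclideanSpace ℝ (Fin n),
      inner ℝ (bernoulliDensity γ ‖u‖ • u - bernoulliDensity γ ‖m‖ • m) (u - m) =
        bernoulliDensity γ ‖u‖ * ‖u‖ ^ 2 - inner ℝ m (bernoulliDensity γ ‖u‖ • u) -
          inner ℝ (bernoulliDensity γ ‖m‖ • m) (u - m) := by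
    intro u
    rw [inner_sub_left, inner_sub_right (bernoulliDensity γ ‖u‖ • u),
      real_inner_smul_left u u, real_inner_self_eq_norm_sq,
      real_inner_comm m (bernoulliDensity γ ‖u‖ • u)]
  have hsub : Integrable (fun u => u - m) ν := hint.sub (integrable_const m)
  have hdiff : Integrable (fun u : EuclideanSpace ℝ (Fin n) =>
      bernoulliDensity γ ‖u‖ * ‖u‖ ^ 2 - inner ℝ m (bernoulliDensity γ ‖u‖ • u)) ν :=
    hener.sub (hflux.const_inner m)
  have hI : Integrable (fun u =>
      inner ℝ (bernoulliDensity γ ‖u‖ • u - bernoulliDensity γ ‖m‖ • m) (u - m)) ν := by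
    simp_rw [hexp]
    exact hdiff.sub (hsub.const_inner _)
  have hzero : ∫ u, inner ℝ (bernoulliDensity γ ‖u‖ • u - bernoulliDensity γ ‖m‖ • m) (u - m) ∂ν
      = 0 := by
    simp_rw [hexp]
    rw [integral_sub hdiff (hsub.const_inner _),
      integral_sub hener (hflux.const_inner m), integral_inner hflux, integral_inner hsub,
      integral_sub hint (integrable_const m), hcomm', ← hm]
    simp
  have hnonneg : 0 ≤ᵐ[ν] fun u =>
      inner ℝ (bernoulliDensity γ ‖u‖ • u - bernoulliDensity γ ‖m‖ • m) (u - m) := by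
    filter_upwards [hball] with u hu using (massFlux_monotone hγ hu hmQ).1
  have hae : ∀ᵐ u ∂ν, u = m := by
    filter_upwards [(integral_eq_zero_iff_of_nonneg_ae hnonneg hI).1 hzero, hball] with u h0 hu
    exact (massFlux_monotone hγ hu hmQ).2 h0
  refine ⟨m, hmQ, ?_⟩
  calc ν = ν.map id := Measure.map_id.symm
    _ = ν.map (fun _ => m) := Measure.map_congr hae
    _ = Measure.dirac m := by rw [Measure.map_const, measure_univ, one_smul]
end

section
/- Let Q > 0 and let ρ : ℝ → ℝ be continuous with ρ(q) > 0 for all q ∈ [0, Q], such that q ↦ ρ(q)·q is strictly increasing on [0, Q]. Let n ≥ 1 and let ν be a Borel probability measure on ℝⁿ supported in the closed ball {u : |u| ≤ Q}, satisfying ∫ ρ(|u|)|u|² dν(u) = Σᵢ₌₁ⁿ (∫ ρ(|u|)uᵢ dν(u))·(∫ uᵢ dν(u)). Then ν is a Dirac mass: there exists u₀ ∈ ℝⁿ with |u₀| ≤ Q such that ν = δ_{u₀}. -/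
/-!
The field `u ↦ ρ(‖u‖) u` is strictly monotone on the ball of radius `Q`
(`flux_inner_nonneg`, `flux_inner_eq_zero`). With `m` the barycenter of `ν`, which lies in the ball,
the commutation identity and `∫ (u - m) dν = 0` give
`∫ ⟪ρ(‖u‖) u - ρ(‖m‖) m, u - m⟫ dν = ∫ ρ(‖u‖)‖u‖² dν - ⟪∫ ρ(‖u‖) u dν, m⟫ = 0`.
The integrand is nonnegative and vanishes only at `u = m`, so `u = m` almost everywhere and
`ν` is the Dirac mass at `m`.
-/

open MeasureTheory

section Monotone

variable {E : Type*} [NormedAddCommGroup E] [InnerProductSpace ℝ E]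

/-- The first term of the decomposition carries the monotonicity of `q ↦ ρ(q) q`,
the second one is the Cauchy-Schwarz defect. -/
lemma flux_inner_eq (a b : ℝ) (u v : E) :
    inner ℝ (a • u - b • v) (u - v) =
      (a * ‖u‖ - b * ‖v‖) * (‖u‖ - ‖v‖) + (a + b) * (‖u‖ * ‖v‖ - inner ℝ u v) := by
  simp only [inner_sub_left, inner_sub_right, real_inner_smul_left, real_inner_self_eq_norm_sq,
    real_inner_comm u v]
  ring

lemma speed_term_nonneg {Q : ℝ} {ρ : ℝ → ℝ}
    (hmono : StrictMonoOn (fun q => ρ q * q) (Set.Icc 0 Q)) {r s : ℝ}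
    (hr : r ∈ Set.Icc 0 Q) (hs : s ∈ Set.Icc 0 Q) :
    0 ≤ (ρ r * r - ρ s * s) * (r - s) := by
  rcases le_total r s with h | h
  · have h1 : ρ r * r ≤ ρ s * s := hmono.monotoneOn hr hs h
    exact mul_nonneg_of_nonpos_of_nonpos (by linarith) (by linarith)
  · have h1 : ρ s * s ≤ ρ r * r := hmono.monotoneOn hs hr h
    exact mul_nonneg (by linarith) (by linarith)

lemma flux_inner_nonneg {Q : ℝ} {ρ : ℝ → ℝ} (hρpos : ∀ q ∈ Set.Icc 0 Q, 0 < ρ q)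
    (hmono : StrictMonoOn (fun q => ρ q * q) (Set.Icc 0 Q)) {u v : E}
    (hu : ‖u‖ ≤ Q) (hv : ‖v‖ ≤ Q) :
    0 ≤ inner ℝ (ρ ‖u‖ • u - ρ ‖v‖ • v) (u - v) := by
  have hu' : ‖u‖ ∈ Set.Icc 0 Q := ⟨norm_nonneg u, hu⟩
  have hv' : ‖v‖ ∈ Set.Icc 0 Q := ⟨norm_nonneg v, hv⟩
  rw [flux_inner_eq]
  exact add_nonneg (speed_term_nonneg hmono hu' hv')
    (mul_nonneg (add_pos (hρpos _ hu') (hρpos _ hv')).le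
      (sub_nonneg.2 (real_inner_le_norm u v)))

lemma flux_inner_eq_zero {Q : ℝ} {ρ : ℝ → ℝ} (hρpos : ∀ q ∈ Set.Icc 0 Q, 0 < ρ q)
    (hmono : StrictMonoOn (fun q => ρ q * q) (Set.Icc 0 Q)) {u v : E}
    (hu : ‖u‖ ≤ Q) (hv : ‖v‖ ≤ Q)
    (h : inner ℝ (ρ ‖u‖ • u - ρ ‖v‖ • v) (u - v) = 0) : u = v := by
  have hu' : ‖u‖ ∈ Set.Icc 0 Q := ⟨norm_nonneg u, hu⟩
  have hv' : ‖v‖ ∈ Set.Icc 0 Q := ⟨norm_nonneg v, hv⟩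
  have h1 := speed_term_nonneg hmono hu' hv'
  have h2 := mul_nonneg (add_pos (hρpos _ hu') (hρpos _ hv')).le
      (sub_nonneg.2 (real_inner_le_norm u v))
  have hnorm : ‖u‖ = ‖v‖ := by
    have h0 := h
    rw [flux_inner_eq] at h0
    rcases mul_eq_zero.1 (by linarith : (ρ ‖u‖ * ‖u‖ - ρ ‖v‖ * ‖v‖) * (‖u‖ - ‖v‖) = 0)
      with h3 | h3
    · exact hmono.injOn hu' hv' (sub_eq_zero.1 h3)
    · exact sub_eq_zero.1 h3
  -- At equal speeds the form is `ρ(‖v‖) ‖u - v‖²`.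
  rw [hnorm, ← smul_sub, real_inner_smul_left, mul_eq_zero, inner_self_eq_zero, sub_eq_zero] at h
  exact h.resolve_left (hρpos _ hv').ne'

end Monotone

/-- Compensated compactness framework for a general density-speed relation: a Young
measure supported in the ball of radius `Q` satisfying the div-curl commutation identity
is a Dirac mass. -/
theorem young_measure_dirac_general (Q : ℝ) (hQ : 0 < Q) (ρ : ℝ → ℝ)
    (hρcont : Continuous ρ) (hρpos : ∀ q ∈ Set.Icc 0 Q, 0 < ρ q)
    (hmono : StrictMonoOn (fun q => ρ q * q) (Set.Icc 0 Q))
    (n : ℕ) (hn : 1 ≤ n)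
    (ν : Measure (EuclideanSpace ℝ (Fin n))) [IsProbabilityMeasure ν]
    (hsupp : ν (Metric.closedBall 0 Q)ᶜ = 0)
    (hcomm : ∫ u, ρ ‖u‖ * ‖u‖ ^ 2 ∂ν =
      ∑ i, (∫ u, ρ ‖u‖ * u i ∂ν) * (∫ u, u i ∂ν)) :
    ∃ u₀ : EuclideanSpace ℝ (Fin n), ‖u₀‖ ≤ Q ∧ ν = Measure.dirac u₀ := by
  have hball : ∀ᵐ u ∂ν, ‖u‖ ≤ Q := by
    have h : ∀ᵐ u ∂ν, u ∈ Metric.closedBall (0 : EuclideanSpace ℝ (Fin n)) Q := hsupp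
    filter_upwards [h] with u hu using mem_closedBall_zero_iff.1 hu
  have hrestrict : ν.restrict (Metric.closedBall 0 Q) = ν :=
    Measure.restrict_eq_self_of_ae_mem hsupp
  have hintR : ∀ f : EuclideanSpace ℝ (Fin n) → ℝ, Continuous f → Integrable f ν := by
    intro f hf
    have h := hf.continuousOn.integrableOn_compact (μ := ν)
      (isCompact_closedBall (0 : EuclideanSpace ℝ (Fin n)) Q)
    rwa [IntegrableOn, hrestrict] at h
  have hintE : ∀ f : EuclideanSpace ℝ (Fin n) → EuclideanSpace ℝ (Fin n),
      Continuous f → Integrable f ν := by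
    intro f hf
    have h := hf.continuousOn.integrableOn_compact (μ := ν)
      (isCompact_closedBall (0 : EuclideanSpace ℝ (Fin n)) Q)
    rwa [IntegrableOn, hrestrict] at h
  have hcont : Continuous fun u : EuclideanSpace ℝ (Fin n) => ρ ‖u‖ :=
    hρcont.comp continuous_norm
  have hcontW : Continuous fun u : EuclideanSpace ℝ (Fin n) => ρ ‖u‖ • u :=
    hcont.smul continuous_id
  have hcoord : ∀ (f : EuclideanSpace ℝ (Fin n) → EuclideanSpace ℝ (Fin n)),
      Continuous f → ∀ i, ∫ u, f u i ∂ν = (∫ u, f u ∂ν) i := fun f hf i =>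
    (EuclideanSpace.proj (𝕜 := ℝ) i).integral_comp_comm (hintE f hf)
  set m : EuclideanSpace ℝ (Fin n) := ∫ u, u ∂ν with hm
  set W : EuclideanSpace ℝ (Fin n) := ∫ u, ρ ‖u‖ • u ∂ν with hW
  have hmQ : ‖m‖ ≤ Q := by
    have h := norm_integral_le_of_norm_le_const hball
    simpa using h
  have hcomm' : ∫ u, ρ ‖u‖ * ‖u‖ ^ 2 ∂ν = inner ℝ m W := by
    rw [hcomm, PiLp.inner_apply]
    refine Finset.sum_congr rfl fun i _ => ?_
    have h1 := hcoord _ hcontW i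
    have h2 := hcoord _ continuous_id i
    simp only [PiLp.smul_apply, smul_eq_mul, id] at h1 h2
    rw [h1, h2]
    rfl
  have hmW : ∫ u, inner ℝ m (ρ ‖u‖ • u) ∂ν = inner ℝ m W := integral_inner (hintE _ hcontW) m
  have hmm : ∫ u, inner ℝ m u ∂ν = ‖m‖ ^ 2 := by
    rw [← real_inner_self_eq_norm_sq m]
    exact integral_inner (hintE _ continuous_id) m
  have hexp : ∀ u, inner ℝ (ρ ‖u‖ • u - ρ ‖m‖ • m) (u - m) =
      (ρ ‖u‖ * ‖u‖ ^ 2 - inner ℝ m (ρ ‖u‖ • u)) - ρ ‖m‖ * (inner ℝ m u - ‖m‖ ^ 2) := by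
    intro u
    simp only [inner_sub_left, inner_sub_right, real_inner_smul_left, real_inner_smul_right,
      real_inner_self_eq_norm_sq, real_inner_comm u m]
    ring
  have hzero : ∫ u, inner ℝ (ρ ‖u‖ • u - ρ ‖m‖ • m) (u - m) ∂ν = 0 := by
    have hi1 := hintR (fun u => ρ ‖u‖ * ‖u‖ ^ 2) (by fun_prop)
    have hi2 := hintR (fun u => inner ℝ m (ρ ‖u‖ • u)) (by fun_prop)
    have hi3 := hintR (fun u => inner ℝ m u) (by fun_prop)
    simp only [hexp]
    rw [integral_sub (hintR _ (by fun_prop)) (hintR _ (by fun_prop)),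
      integral_sub hi1 hi2, integral_const_mul, integral_sub hi3 (integrable_const _),
      hcomm', hmW, hmm]
    simp
  have hnonneg : 0 ≤ᵐ[ν] fun u => inner ℝ (ρ ‖u‖ • u - ρ ‖m‖ • m) (u - m) := by
    filter_upwards [hball] with u hu using flux_inner_nonneg hρpos hmono hu hmQ
  have hae := (integral_eq_zero_iff_of_nonneg_ae hnonneg (hintR _ (by fun_prop))).1 hzero
  have hconst : id =ᵐ[ν] fun _ => m := by
    filter_upwards [hball, hae] with u hu h0 using flux_inner_eq_zero hρpos hmono hu hmQ h0
  refine ⟨m, hmQ, ?_⟩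
  calc ν = ν.map id := Measure.map_id.symm
    _ = ν.map (fun _ => m) := Measure.map_congr hconst
    _ = Measure.dirac m := by rw [Measure.map_const, measure_univ, one_smul]
end
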